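/- Let 𝒞 ⊆ 𝒜 be a linear code with weight distribution (c_i) and let φ be a natural number with 0 ≤ φ ≤ n. (a) If every nonzero A ∈ 𝒞^⊥ has rank(A) > 2φ, then q^{mφ} · Σ_{i=φ}^{n} q^{2φ(n−i)} [i; φ] c_i = |𝒞| · [n; φ] · γ(m, φ). (b) If every A ∈ 𝒞^⊥ has rank(A) < 2φ (i.e. φ exceeds the diameter of the dual code), then Σ_{i=0}^{φ} (−1)^i q^{i(i−1)} q^{2i(φ−i)} [n−i; n−φ] γ(m−2i, φ−i) c_i = 0. -/

import Mathlib

/-- The skew-q-nary Gaussian coefficient `[x;k]` for real `x`. -/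
noncomputable def gaussQ (q x : ℝ) (k : ℕ) : ℝ :=
  ∏ i ∈ Finset.range k, (q ^ (2 * x) - q ^ (2 * (i : ℝ))) / (q ^ (2 * (k : ℝ)) - q ^ (2 * (i : ℝ)))

/-- The skew-q-nary Gamma function `γ(x,k)`. -/
noncomputable def skewGamma (q x : ℝ) (k : ℕ) : ℝ :=
  ∏ i ∈ Finset.range k, (q ^ x - q ^ (2 * (i : ℝ)))

section

open Matrix

/-- The space of alternating matrices. -/
def alternatingMatrix (ι F : Type*) [Field F] : Submodule F (Matrix ι ι F) where
  carrier := {A | Aᵀ = -A ∧ ∀ i, A i i = 0}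
  zero_mem' := by simp
  add_mem' := by
    rintro A B ⟨hA, hA'⟩ ⟨hB, hB'⟩
    refine ⟨?_, fun i => by simp [hA', hB']⟩
    rw [transpose_add, hA, hB, neg_add]
  smul_mem' := by
    rintro r A ⟨hA, hA'⟩
    exact ⟨by rw [transpose_smul, hA, smul_neg], fun i => by simp [hA']⟩

section LinearAlgebra

variable {F : Type*} [Field F] {ι κ : Type*}

theorem apply_swap_of_mem_alternatingMatrix {A : Matrix ι ι F} (hA : A ∈ alternatingMatrix ι F)
    (i j : ι) : A j i = -A i j := by
  have h := congrFun (congrFun hA.1 i) j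
  simpa using h

theorem sum_sum_eq_zero_of_antisymm [Fintype ι] {f : ι → ι → F}
    (h : ∀ i j, f i j + f j i = 0) (h0 : ∀ i, f i i = 0) : ∑ i, ∑ j, f i j = 0 := by
  classical
  rw [← Fintype.sum_prod_type']
  refine Finset.sum_involution (fun x _ => x.swap) (fun x _ => h _ _) (fun x _ hx hs => hx ?_)
    (by simp) (by simp)
  obtain ⟨i, j⟩ := x
  obtain rfl : j = i := congrArg Prod.fst hs
  exact h0 j

theorem dotProduct_mulVec_self_of_mem_alternatingMatrix [Fintype ι] {A : Matrix ι ι F}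
    (hA : A ∈ alternatingMatrix ι F) (v : ι → F) : v ⬝ᵥ A *ᵥ v = 0 := by
  simp only [dotProduct, mulVec, Finset.mul_sum]
  refine sum_sum_eq_zero_of_antisymm (fun i j => ?_) (fun i => by simp [hA.2])
  rw [apply_swap_of_mem_alternatingMatrix hA i j]
  ring

theorem congr_mem_alternatingMatrix [Fintype ι] {A : Matrix ι ι F}
    (hA : A ∈ alternatingMatrix ι F) (P : Matrix ι κ F) :
    Pᵀ * A * P ∈ alternatingMatrix κ F := by
  refine ⟨by simp [transpose_mul, hA.1, Matrix.mul_assoc], fun k => ?_⟩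
  rw [← dotProduct_mulVec_self_of_mem_alternatingMatrix hA (fun i => P i k), Matrix.mul_assoc]
  simp [Matrix.mul_apply, dotProduct, mulVec]

theorem reindex_mem_alternatingMatrix {A : Matrix ι ι F} (hA : A ∈ alternatingMatrix ι F)
    (e : ι ≃ κ) : A.reindex e e ∈ alternatingMatrix κ F :=
  ⟨by ext i j; simpa using apply_swap_of_mem_alternatingMatrix hA _ _, fun k => by simp [hA.2]⟩

theorem rank_fromCols_replicateCol [Fintype ι] [Finite κ] (b : κ → F) (M : Matrix κ ι F)
    [Decidable (b ∈ LinearMap.range M.mulVecLin)] :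
    (fromCols (replicateCol Unit b) M).rank =
      M.rank + if b ∈ LinearMap.range M.mulVecLin then 0 else 1 := by
  have h : LinearMap.range (fromCols (replicateCol Unit b) M).mulVecLin =
      LinearMap.range M.mulVecLin ⊔ Submodule.span F {b} := by
    rw [range_mulVecLin, range_mulVecLin, ← Submodule.span_union]
    congr 1
    ext x
    simp only [Set.mem_range, Sum.exists, Set.mem_union, Set.mem_singleton_iff]
    rw [or_comm]
    refine or_congr ⟨fun ⟨i, hi⟩ => ⟨i, hi⟩, fun ⟨i, hi⟩ => ⟨i, hi⟩⟩
      ⟨fun ⟨i, hi⟩ => hi.symm, fun hi => ⟨(), hi.symm⟩⟩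
  rw [Matrix.rank, h]
  split_ifs with hb
  · rw [sup_eq_left.2 (by simpa using hb)]; rfl
  · rw [Submodule.finrank_sup_span_singleton hb]; rfl

/-- The square matrix `[[0, -bᵀ], [b, B]]`. -/
def border (b : κ → F) (B : Matrix κ κ F) : Matrix (Unit ⊕ κ) (Unit ⊕ κ) F :=
  fromBlocks 0 (-replicateRow Unit b) (replicateCol Unit b) B

theorem border_mem_alternatingMatrix {B : Matrix κ κ F} (hB : B ∈ alternatingMatrix κ F)
    (b : κ → F) : border b B ∈ alternatingMatrix (Unit ⊕ κ) F := by
  refine ⟨?_, ?_⟩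
  · rw [border, fromBlocks_transpose, fromBlocks_neg, hB.1]
    congr 1 <;> ext <;> simp
  · rintro (i | i)
    · simp [border]
    · simpa [border] using hB.2 i

theorem trace_border [Fintype κ] (a b : κ → F) (A B : Matrix κ κ F) :
    trace ((border a A)ᵀ * border b B) = 2 * (a ⬝ᵥ b) + trace (Aᵀ * B) := by
  simp [border, fromBlocks_transpose, fromBlocks_multiply, Matrix.trace, dotProduct,
    Matrix.mul_apply, Finset.sum_add_distrib]
  ring

/-- An alternating matrix is determined by its first column and the block obtained by deleting
the first row and column. -/
def borderEquiv (κ F : Type*) [Field F] :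
    alternatingMatrix κ F × (κ → F) ≃ alternatingMatrix (Unit ⊕ κ) F where
  toFun x := ⟨border x.2 x.1, border_mem_alternatingMatrix x.1.2 _⟩
  invFun M := ⟨⟨M.1.toBlocks₂₂, by
      ext i j
      exact apply_swap_of_mem_alternatingMatrix M.2 (Sum.inr i) (Sum.inr j),
      fun i => M.2.2 (Sum.inr i)⟩, fun k => M.1 (Sum.inr k) (Sum.inl ())⟩
  left_inv x := by
    ext <;> simp [border]
  right_inv M := by
    ext (i | i) (j | j)
    · simpa [border] using (M.2.2 (Sum.inl ())).symm
    · simpa [border] using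
        (apply_swap_of_mem_alternatingMatrix M.2 (Sum.inr j) (Sum.inl ())).symm
    · simp [border]
    · simp [border, toBlocks₂₂]

theorem rank_border [Fintype κ] {B : Matrix κ κ F} (hB : B ∈ alternatingMatrix κ F) (b : κ → F)
    [Decidable (b ∈ LinearMap.range B.mulVecLin)] :
    (border b B).rank = B.rank + if b ∈ LinearMap.range B.mulVecLin then 0 else 2 := by
  classical
  have h : (border b B)ᵀ = fromCols (replicateCol Unit (Sum.elim 0 (-b)))
      (fromCols (replicateCol Unit b) B)ᵀ := by
    ext (i | i) (j | j) <;> simp [border]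
  have hmem : Sum.elim (0 : Unit → F) (-b) ∈
      LinearMap.range (fromCols (replicateCol Unit b) B)ᵀ.mulVecLin ↔
      b ∈ LinearMap.range B.mulVecLin := by
    simp only [LinearMap.mem_range, mulVecLin_apply, transpose_fromCols, fromRows_mulVec]
    refine exists_congr fun w => ⟨fun hw => ?_, fun hw => ?_⟩
    · have := congrArg (fun f => f ∘ Sum.inr) hw
      simpa [hB.1, neg_mulVec] using this
    · rw [hB.1, neg_mulVec, hw]
      congr 1
      ext i
      have := dotProduct_mulVec_self_of_mem_alternatingMatrix hB w
      rw [hw, dotProduct_comm] at this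
      simpa [mulVec] using this
  rw [← rank_transpose, h, rank_fromCols_replicateCol, rank_transpose, rank_fromCols_replicateCol]
  simp only [hmem]
  split_ifs <;> rfl

theorem exists_equiv_unit_sum [DecidableEq ι] (i : ι) :
    ∃ e : ι ≃ Unit ⊕ {k : ι // k ≠ i}, e i = Sum.inl () ∧ ∀ k (hk : k ≠ i), e k = Sum.inr ⟨k, hk⟩ :=
  ⟨((Equiv.optionSubtypeNe i).symm.trans (Equiv.optionEquivSumPUnit _)).trans (Equiv.sumComm _ _),
    by simp, fun k hk => by simp [Equiv.optionSubtypeNe_symm_of_ne hk]⟩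

/-- Elimination of the first two rows and columns of an alternating matrix by a congruence. -/
theorem border_border_eq_congr [Fintype κ] [DecidableEq κ] {c : F} (hc : c ≠ 0) (a d : κ → F)
    {A : Matrix κ κ F} (hA : A ∈ alternatingMatrix κ F) :
    ∃ P : Matrix (Unit ⊕ (Unit ⊕ κ)) (Unit ⊕ (Unit ⊕ κ)) F, IsUnit P.det ∧
      ∃ A' ∈ alternatingMatrix κ F,
        border (Sum.elim (fun _ => c) a) (border d A) =
          Pᵀ * border (Sum.elim (fun _ => c) 0) (border 0 A') * P := by
  refine ⟨fromBlocks 1 (fromCols 0 (replicateRow Unit (-c⁻¹ • d))) 0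
    (fromBlocks 1 (replicateRow Unit (c⁻¹ • a)) 0 1), by simp,
    A + c⁻¹ • (vecMulVec a d - vecMulVec d a), ⟨?_, fun i => ?_⟩, ?_⟩
  · ext k l
    have := apply_swap_of_mem_alternatingMatrix hA k l
    simp only [transpose_apply, Matrix.neg_apply, Matrix.add_apply, Matrix.smul_apply,
      Matrix.sub_apply, vecMulVec_apply, this,
      smul_eq_mul]
    ring
  · simp [hA.2, vecMulVec_apply, mul_comm]
  · ext (i | i | i) (j | j | j) <;>
    simp [border, fromBlocks_transpose, fromBlocks_multiply, Matrix.mul_apply, Matrix.one_apply,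
      vecMulVec_apply, hc] <;>
    field_simp
    ring

theorem alternatingMatrix_induction
    {motive : ∀ (ι : Type) [Fintype ι] [DecidableEq ι], Matrix ι ι F → Prop}
    (zero : ∀ (ι : Type) [Fintype ι] [DecidableEq ι], motive ι 0)
    (reindex : ∀ (ι κ : Type) [Fintype ι] [DecidableEq ι] [Fintype κ] [DecidableEq κ] (e : ι ≃ κ),
      ∀ A ∈ alternatingMatrix ι F, motive κ (A.reindex e e) → motive ι A)
    (congr : ∀ (ι : Type) [Fintype ι] [DecidableEq ι] (P : Matrix ι ι F), IsUnit P.det →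
      ∀ A ∈ alternatingMatrix ι F, motive ι A → motive ι (Pᵀ * A * P))
    (step : ∀ (κ : Type) [Fintype κ] [DecidableEq κ] (c : F), c ≠ 0 →
      ∀ A ∈ alternatingMatrix κ F, motive κ A →
        motive (Unit ⊕ (Unit ⊕ κ)) (border (Sum.elim (fun _ => c) 0) (border 0 A)))
    (ι : Type) [Fintype ι] [DecidableEq ι] (A : Matrix ι ι F) (hA : A ∈ alternatingMatrix ι F) :
    motive ι A := by
  induction hs : Fintype.card ι using Nat.strong_induction_on generalizing ι with
  | _ s ih =>
  by_cases h0 : A = 0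
  · subst h0; exact zero ι
  obtain ⟨i, j, hij⟩ : ∃ i j, A j i ≠ 0 := by
    by_contra! h
    exact h0 (by ext i j; exact h j i)
  have hne : j ≠ i := by rintro rfl; exact hij (hA.2 j)
  obtain ⟨e₁, he₁, he₁'⟩ := exists_equiv_unit_sum i
  obtain ⟨e₂, he₂, -⟩ := exists_equiv_unit_sum (⟨j, hne⟩ : {k : ι // k ≠ i})
  let e := e₁.trans (Equiv.sumCongr (Equiv.refl Unit) e₂)
  have hei : e i = Sum.inl () := by simp [e, he₁]
  have hej : e j = Sum.inr (Sum.inl ()) := by simp [e, he₁' j hne, he₂]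
  refine reindex ι _ e A hA ?_
  obtain ⟨⟨A₁, a⟩, h₁⟩ := (borderEquiv _ F).surjective ⟨_, reindex_mem_alternatingMatrix hA e⟩
  obtain ⟨⟨A₂, d⟩, rfl⟩ := (borderEquiv _ F).surjective A₁
  have h₁ : border a (border d A₂) = A.reindex e e := congrArg Subtype.val h₁
  have ha : a (Sum.inl ()) = A j i := by
    have := congrFun (congrFun h₁ (e j)) (e i)
    rw [reindex_apply, submatrix_apply, e.symm_apply_apply, e.symm_apply_apply, hei, hej] at this
    exact this
  have ha' : a = Sum.elim (fun _ => A j i) (fun k => a (Sum.inr k)) := by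
    ext (k | k) <;> simp [ha]
  obtain ⟨P, hP, A', hA', h⟩ := border_border_eq_congr hij (fun k => a (Sum.inr k)) d A₂.2
  rw [← h₁, ha', h]
  refine congr _ P hP _ (border_mem_alternatingMatrix (border_mem_alternatingMatrix hA' _) _) ?_
  refine step _ _ hij A' hA' (ih _ ?_ _ _ hA' rfl)
  rw [← hs, Fintype.card_congr e]
  simp only [Fintype.card_sum, Fintype.card_unit]
  omega

end LinearAlgebra

theorem even_rank_of_mem_alternatingMatrix {F : Type*} [Field F] {ι : Type} [Fintype ι]
    {A : Matrix ι ι F} (hA : A ∈ alternatingMatrix ι F) : Even A.rank := by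
  classical
  refine alternatingMatrix_induction (motive := fun ι _ _ A => Even A.rank) ?_ ?_ ?_ ?_ ι A hA
  · intro ι _ _; simp
  · intro ι κ _ _ _ _ e A hA h
    rwa [rank_reindex] at h
  · intro ι _ _ P hP A hA h
    rwa [rank_mul_eq_left_of_isUnit_det _ _ hP,
      rank_mul_eq_right_of_isUnit_det _ _ (by rwa [det_transpose])]
  · intro κ _ _ c hc A hA h
    rw [rank_border (border_mem_alternatingMatrix hA _), rank_border hA]
    split_ifs <;> grind

theorem rank_border_border {F : Type*} [Field F] {κ : Type*} [Fintype κ] {c : F} (hc : c ≠ 0)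
    {A : Matrix κ κ F} (hA : A ∈ alternatingMatrix κ F) :
    (border (Sum.elim (fun _ => c) 0) (border 0 A)).rank = A.rank + 2 := by
  classical
  rw [rank_border (border_mem_alternatingMatrix hA _), rank_border hA, if_pos (zero_mem _),
    if_neg]
  rintro ⟨v, hv⟩
  have := congrFun hv (Sum.inl ())
  simp [border, mulVec, dotProduct] at this
  exact hc this.symm

theorem exists_mem_alternatingMatrix_rank {F : Type*} [Field F] (ι : Type) [Fintype ι] {r : ℕ}
    (hr : 2 * r ≤ Fintype.card ι) : ∃ A ∈ alternatingMatrix ι F, A.rank = 2 * r := by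
  classical
  induction r generalizing ι with
  | zero => exact ⟨0, zero_mem _, rank_zero⟩
  | succ r ih =>
    obtain ⟨A, hA, hAr⟩ := ih (Fin (Fintype.card ι - 2)) (by simp; omega)
    have e : ι ≃ Unit ⊕ (Unit ⊕ Fin (Fintype.card ι - 2)) :=
      Fintype.equivOfCardEq (by simp; omega)
    refine ⟨_, reindex_mem_alternatingMatrix
      (border_mem_alternatingMatrix (border_mem_alternatingMatrix hA 0)
        (Sum.elim (fun _ => 1) 0)) e.symm, ?_⟩
    rw [rank_reindex, rank_border_border one_ne_zero hA]
    omega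

open scoped Classical in
theorem sum_addChar_linearMap {F : Type*} [Field F] {ψ : AddChar F ℂ} (hψ : ψ.IsPrimitive)
    {V : Type*} [AddCommGroup V]
    [Module F V] [Fintype V] (l : V →ₗ[F] F) :
    ∑ v, ψ (l v) = if l = 0 then (Fintype.card V : ℂ) else 0 := by
  split_ifs with hl
  · simp [hl]
  · obtain ⟨v, hv⟩ : ∃ v, l v ≠ 0 := by
      by_contra! h
      exact hl (LinearMap.ext h)
    obtain ⟨r, hr⟩ := AddChar.ne_one_iff.1 (hψ hv)
    have : ψ.compAddMonoidHom l.toAddMonoidHom ≠ 0 := by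
      refine AddChar.ne_zero_iff.2 ⟨r • v, ?_⟩
      simpa [mul_comm] using hr
    simpa using AddChar.sum_eq_zero_iff_ne_zero.2 this

section Fourier

variable {F : Type*} [Field F] [Fintype F] {ι κ : Type} [Fintype ι] [Fintype κ]

noncomputable local instance {V : Type*} [AddCommGroup V] [Module F V] [Finite V]
    (S : Submodule F V) : Fintype S := Fintype.ofFinite S

/-- The Fourier transform of a function of half the rank on the space of alternating matrices. -/
noncomputable def rankFourier (ψ : AddChar F ℂ) (h : ℕ → ℂ) (A : Matrix ι ι F) : ℂ :=
  ∑ B : alternatingMatrix ι F, h (B.1.rank / 2) * ψ (trace (Aᵀ * B.1))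

theorem rankFourier_reindex (ψ : AddChar F ℂ) (h : ℕ → ℂ) (A : Matrix ι ι F) (e : ι ≃ κ) :
    rankFourier ψ h (A.reindex e e) = rankFourier ψ h A := by
  symm
  refine Fintype.sum_equiv
    ⟨fun B => ⟨B.1.reindex e e, reindex_mem_alternatingMatrix B.2 e⟩,
      fun B => ⟨B.1.reindex e.symm e.symm, reindex_mem_alternatingMatrix B.2 e.symm⟩,
      fun B => by ext; simp, fun B => by ext; simp⟩ _ _ fun B => ?_
  simp only [Equiv.coe_fn_mk, rank_reindex]
  congr 2
  simp only [reindex_apply, transpose_submatrix, submatrix_mul_equiv, trace, diag_apply,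
    submatrix_apply]
  exact (Equiv.sum_comp e.symm fun i => (Aᵀ * B.1) i i).symm

theorem rankFourier_congr [DecidableEq ι] (ψ : AddChar F ℂ) (h : ℕ → ℂ) (A P : Matrix ι ι F)
    (hP : IsUnit P.det) : rankFourier ψ h (Pᵀ * A * P) = rankFourier ψ h A := by
  have hPt : IsUnit Pᵀ.det := by rwa [det_transpose]
  refine Fintype.sum_equiv
    ⟨fun B => ⟨P * B.1 * Pᵀ, by simpa using congr_mem_alternatingMatrix B.2 Pᵀ⟩,
      fun B => ⟨P⁻¹ * B.1 * (P⁻¹)ᵀ, by simpa using congr_mem_alternatingMatrix B.2 (P⁻¹)ᵀ⟩,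
      fun B => ?_, fun B => ?_⟩ _ _ fun B => ?_
  · ext1
    simp [Matrix.mul_assoc, transpose_nonsing_inv, mul_nonsing_inv _ hPt,
      nonsing_inv_mul_cancel_left _ _ hP]
  · ext1
    simp [Matrix.mul_assoc, transpose_nonsing_inv, nonsing_inv_mul _ hPt,
      mul_nonsing_inv_cancel_left _ _ hP]
  · simp only [Equiv.coe_fn_mk]
    rw [rank_mul_eq_left_of_isUnit_det _ _ hPt, rank_mul_eq_right_of_isUnit_det _ _ hP]
    congr 2
    simp only [transpose_mul, transpose_transpose, Matrix.mul_assoc]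
    rw [trace_mul_comm]
    simp only [Matrix.mul_assoc]

open scoped Classical in
theorem rankFourier_border (h2 : (2 : F) ≠ 0) {ψ : AddChar F ℂ} (hψ : ψ.IsPrimitive) (h : ℕ → ℂ)
    (a : κ → F) (A : Matrix κ κ F) :
    rankFourier ψ h (border a A) = ∑ B : alternatingMatrix κ F, ψ (trace (Aᵀ * B.1)) *
      ((h (B.1.rank / 2) - h (B.1.rank / 2 + 1)) *
          (if B.1 *ᵥ a = 0 then (Fintype.card F : ℂ) ^ B.1.rank else 0) +
        h (B.1.rank / 2 + 1) *
          if a = 0 then (Fintype.card F : ℂ) ^ Fintype.card κ else 0) := by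
  rw [rankFourier, ← (borderEquiv κ F).sum_comp, Fintype.sum_prod_type]
  refine Finset.sum_congr rfl fun B _ => ?_
  let l : (κ → F) →ₗ[F] F := (2 : F) • dotProductBilin F F a
  have hl : ∀ b, l b = 2 * (a ⬝ᵥ b) := fun b => rfl
  have hl0 : l = 0 ↔ a = 0 := by
    constructor
    · intro h0
      ext i
      have := congrArg (fun f => f (Pi.single i 1)) h0
      simpa [hl, h2] using this
    · rintro rfl; ext; simp [hl]
  let W := LinearMap.range B.1.mulVecLin
  have hlW : l ∘ₗ W.subtype = 0 ↔ B.1 *ᵥ a = 0 := by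
    have : ∀ v, l (B.1 *ᵥ v) = -2 * ((B.1 *ᵥ a) ⬝ᵥ v) := fun v => by
      rw [hl, dotProduct_mulVec, ← mulVec_transpose, B.2.1, neg_mulVec, neg_dotProduct]; ring
    constructor
    · intro h0
      ext i
      have h1 := congrArg (fun f => f ⟨B.1 *ᵥ Pi.single i 1, ⟨_, rfl⟩⟩) h0
      simp only [LinearMap.comp_apply, Submodule.subtype_apply, this] at h1
      simpa [h2] using h1
    · intro h0
      ext ⟨_, v, rfl⟩
      simp only [LinearMap.comp_apply, Submodule.subtype_apply, mulVecLin_apply, this, h0]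
      simp
  have hrank : ∀ b, h ((border b B.1).rank / 2) = h (B.1.rank / 2 + 1) +
      if b ∈ W then h (B.1.rank / 2) - h (B.1.rank / 2 + 1) else 0 := fun b => by
    rw [rank_border B.2]
    split_ifs <;> simp
  have hcard : (Fintype.card W : ℂ) = (Fintype.card F : ℂ) ^ B.1.rank := by
    rw [Module.card_eq_pow_finrank (K := F), Nat.cast_pow]; rfl
  have hW : ∑ b, (if b ∈ W then ψ (l b) else 0) =
      if B.1 *ᵥ a = 0 then (Fintype.card F : ℂ) ^ B.1.rank else 0 := by
    rw [← Finset.sum_filter, Finset.sum_subtype (p := (· ∈ W)) _ (by simp), ← hcard]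
    simp only [← hlW]
    exact sum_addChar_linearMap hψ (l ∘ₗ W.subtype)
  have hall : ∑ b, ψ (l b) = if a = 0 then (Fintype.card F : ℂ) ^ Fintype.card κ else 0 := by
    rw [sum_addChar_linearMap hψ l]
    simp [hl0]
  rw [← hW, ← hall, Finset.mul_sum, Finset.mul_sum, ← Finset.sum_add_distrib, Finset.mul_sum]
  refine Finset.sum_congr rfl fun b _ => ?_
  change h ((border b B.1).rank / 2) * ψ (trace ((border a A)ᵀ * border b B.1)) = _
  rw [hrank, trace_border, AddChar.map_add_eq_mul, ← hl]
  split_ifs <;> ring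

theorem rankFourier_zero_border (h2 : (2 : F) ≠ 0) {ψ : AddChar F ℂ} (hψ : ψ.IsPrimitive)
    (h : ℕ → ℂ) :
    rankFourier ψ h (0 : Matrix (Unit ⊕ κ) (Unit ⊕ κ) F) =
      rankFourier ψ (fun j => ((Fintype.card F : ℂ) ^ 2) ^ j * (h j - h (j + 1)) +
        (Fintype.card F : ℂ) ^ Fintype.card κ * h (j + 1)) (0 : Matrix κ κ F) := by
  have : (0 : Matrix (Unit ⊕ κ) (Unit ⊕ κ) F) = border 0 0 := by
    ext (i | i) (j | j) <;> simp [border]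
  rw [this, rankFourier_border h2 hψ]
  refine Finset.sum_congr rfl fun B _ => ?_
  have hev := even_rank_of_mem_alternatingMatrix B.2
  beta_reduce
  rw [if_pos (mulVec_zero _), if_pos rfl, ← pow_mul, Nat.two_mul_div_two_of_even hev]
  ring

theorem rankFourier_border_border (h2 : (2 : F) ≠ 0) {ψ : AddChar F ℂ} (hψ : ψ.IsPrimitive)
    (h : ℕ → ℂ) {c : F} (hc : c ≠ 0) (A : Matrix κ κ F) :
    rankFourier ψ h (border (Sum.elim (fun _ => c) 0) (border 0 A)) =
      rankFourier ψ (fun j => ((Fintype.card F : ℂ) ^ 2) ^ j * (h j - h (j + 1))) A := by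
  classical
  have hne : (Sum.elim (fun _ => c) 0 : Unit ⊕ κ → F) ≠ 0 := fun h0 => by
    simpa [hc] using congrFun h0 (Sum.inl ())
  have hker : ∀ (b : κ → F) (B : Matrix κ κ F),
      border b B *ᵥ (Sum.elim (fun _ => c) 0) = 0 ↔ b = 0 := by
    intro b B
    constructor
    · intro h0
      ext k
      have := congrFun h0 (Sum.inr k)
      simpa [border, mulVec, dotProduct, hc] using this
    · rintro rfl
      ext (k | k) <;> simp [border, mulVec, dotProduct]
  rw [rankFourier_border h2 hψ, ← (borderEquiv κ F).sum_comp, Fintype.sum_prod_type]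
  refine Finset.sum_congr rfl fun B _ => ?_
  rw [Finset.sum_eq_single 0]
  · have hev := even_rank_of_mem_alternatingMatrix B.2
    have hr : (border 0 B.1).rank = B.1.rank := by
      rw [rank_border B.2, if_pos (zero_mem _), add_zero]
    simp only [borderEquiv, Equiv.coe_fn_mk, hker, if_true, if_neg hne, hr, trace_border]
    rw [← pow_mul, Nat.two_mul_div_two_of_even hev]
    simp
    ring
  · intro b _ hb
    simp only [borderEquiv, Equiv.coe_fn_mk, hker, if_neg hb, if_neg hne]
    simp
  · simp

end Fourier

section Algebra

variable {K : Type*} [Field K]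

/-- The product `(x - 1) (x - Q) ⋯ (x - Q ^ (k - 1))`. -/
def shiftedProd (Q x : K) (k : ℕ) : K := ∏ i ∈ Finset.range k, (x - Q ^ i)

theorem shiftedProd_zero (Q x : K) : shiftedProd Q x 0 = 1 := by simp [shiftedProd]

theorem shiftedProd_succ (Q x : K) (k : ℕ) :
    shiftedProd Q x (k + 1) = shiftedProd Q x k * (x - Q ^ k) := Finset.prod_range_succ _ _

theorem shiftedProd_succ' {Q : K} (hQ : Q ≠ 0) (x : K) (k : ℕ) :
    shiftedProd Q x (k + 1) = (x - 1) * Q ^ k * shiftedProd Q (x / Q) k := by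
  have h : ∀ i ∈ Finset.range k, x - Q ^ (i + 1) = Q * (x / Q - Q ^ i) := fun i _ => by
    field_simp
    ring
  rw [shiftedProd, Finset.prod_range_succ', Finset.prod_congr rfl h, Finset.prod_mul_distrib]
  simp only [Finset.prod_const, Finset.card_range, pow_zero, shiftedProd]
  ring

theorem shiftedProd_pow_eq_zero (Q : K) {a k : ℕ} (h : a < k) : shiftedProd Q (Q ^ a) k = 0 :=
  Finset.prod_eq_zero (Finset.mem_range.2 h) (sub_self _)

theorem shiftedProd_pow_self_succ {Q : K} (hQ : Q ≠ 0) (k : ℕ) :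
    shiftedProd Q (Q ^ (k + 1)) (k + 1) =
      (Q ^ (k + 1) - 1) * Q ^ k * shiftedProd Q (Q ^ k) k := by
  rw [shiftedProd_succ' hQ, pow_succ, mul_div_cancel_right₀ _ hQ]

theorem shiftedProd_pow_self_ne_zero {Q : K} (hQ : Q ≠ 0) (hQ1 : ∀ k : ℕ, Q ^ (k + 1) ≠ 1)
    (k : ℕ) : shiftedProd Q (Q ^ k) k ≠ 0 := by
  induction k with
  | zero => simp [shiftedProd_zero]
  | succ k ih =>
    rw [shiftedProd_pow_self_succ hQ]
    exact mul_ne_zero (mul_ne_zero (sub_ne_zero.2 (hQ1 k)) (pow_ne_zero _ hQ)) ih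

/-- The weight attached to matrices of rank `2 * j` on the dual side of the moment identities. -/
def momentKernel (Q X Y : K) (k j : ℕ) : K :=
  if j ≤ k then (-1) ^ j * Q ^ (j.choose 2) * Q ^ (j * (k - j)) *
    (shiftedProd Q (X / Q ^ j) (k - j) * shiftedProd Q (Y / Q ^ j) (k - j) /
      shiftedProd Q (Q ^ (k - j)) (k - j))
  else 0

theorem momentKernel_comm (Q X Y : K) (k j : ℕ) :
    momentKernel Q X Y k j = momentKernel Q Y X k j := by
  simp only [momentKernel, mul_comm (shiftedProd Q (X / Q ^ j) (k - j))]

theorem momentKernel_of_lt (Q X Y : K) {k j : ℕ} (h : k < j) : momentKernel Q X Y k j = 0 :=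
  if_neg h.not_ge

theorem momentKernel_self (Q X Y : K) (j : ℕ) :
    momentKernel Q X Y j j = (-1) ^ j * Q ^ (j.choose 2) := by
  simp [momentKernel, shiftedProd_zero]

theorem momentKernel_add (Q X Y : K) (j b : ℕ) :
    momentKernel Q X Y (j + b) j = (-1) ^ j * Q ^ (j.choose 2) * Q ^ (j * b) *
    (shiftedProd Q (X / Q ^ j) b * shiftedProd Q (Y / Q ^ j) b / shiftedProd Q (Q ^ b) b) := by
  simp [momentKernel]

theorem momentKernel_diff {Q : K} (hQ : Q ≠ 0) (hQ1 : ∀ k : ℕ, Q ^ (k + 1) ≠ 1) (X Y : K)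
    (k j : ℕ) :
    Q ^ j * (momentKernel Q X Y (k + 1) j - momentKernel Q X Y (k + 1) (j + 1)) =
      Q ^ (k + 1) * momentKernel Q (X / Q) (Y / Q) (k + 1) j +
        X * Y / Q * momentKernel Q (X / Q) (Y / Q) k j := by
  rcases lt_trichotomy j (k + 1) with h | rfl | h
  · obtain ⟨c, rfl⟩ := Nat.exists_eq_add_of_le (Nat.lt_succ_iff.1 h)
    have h₁ : j + c + 1 = j + (c + 1) := by ring
    have h₂ : j + c + 1 = j + 1 + c := by ring
    have hW := shiftedProd_pow_self_ne_zero hQ hQ1 c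
    have hc := sub_ne_zero.2 (hQ1 c)
    have hX : X / Q ^ (j + 1) = X / Q / Q ^ j := by rw [pow_succ', div_div]
    have hY : Y / Q ^ (j + 1) = Y / Q / Q ^ j := by rw [pow_succ', div_div]
    conv_lhs => rw [h₁, momentKernel_add, ← h₁, h₂, momentKernel_add]
    conv_rhs => rw [momentKernel_add, h₁, momentKernel_add]
    rw [shiftedProd_pow_self_succ hQ, shiftedProd_succ' hQ, shiftedProd_succ' hQ,
      shiftedProd_succ, shiftedProd_succ, hX, hY, div_right_comm X, div_right_comm Y,
      Nat.choose_succ_left _ _ (by norm_num), Nat.choose_one_right]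
    generalize shiftedProd Q (X / Q ^ j / Q) c = U
    generalize shiftedProd Q (Y / Q ^ j / Q) c = V
    generalize shiftedProd Q (Q ^ c) c = W at *
    field_simp
    ring
  · rw [momentKernel_self, momentKernel_self, momentKernel_of_lt _ _ _ (Nat.lt_succ_self _),
      momentKernel_of_lt _ _ _ (Nat.lt_succ_self _)]
    ring
  · rw [momentKernel_of_lt _ _ _ h, momentKernel_of_lt _ _ _ h, momentKernel_of_lt _ _ _ (by omega),
      momentKernel_of_lt _ _ _ (by omega)]
    ring

theorem momentKernel_border {Q : K} (hQ : Q ≠ 0) (hQ1 : ∀ k : ℕ, Q ^ (k + 1) ≠ 1) (X Y : K)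
    (k j : ℕ) :
    Q ^ j * (momentKernel Q X Y k j - momentKernel Q X Y k (j + 1)) +
        Y * momentKernel Q X Y k (j + 1) =
      Q ^ k * momentKernel Q (X / Q) Y k j := by
  rcases lt_trichotomy j k with h | rfl | h
  · obtain ⟨c, rfl⟩ := Nat.exists_eq_add_of_lt h
    have h₁ : j + c + 1 = j + (c + 1) := by ring
    have h₂ : j + c + 1 = j + 1 + c := by ring
    have hW := shiftedProd_pow_self_ne_zero hQ hQ1 c
    have hc := sub_ne_zero.2 (hQ1 c)
    have hX : X / Q ^ (j + 1) = X / Q / Q ^ j := by rw [pow_succ', div_div]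
    have hY : Y / Q ^ (j + 1) = Y / Q ^ j / Q := by rw [pow_succ, div_div]
    conv_lhs => rw [h₁, momentKernel_add, ← h₁, h₂, momentKernel_add]
    conv_rhs => rw [h₁, momentKernel_add]
    rw [shiftedProd_pow_self_succ hQ, shiftedProd_succ' hQ, shiftedProd_succ' hQ,
      shiftedProd_succ, hX, hY, div_right_comm X,
      Nat.choose_succ_left _ _ (by norm_num), Nat.choose_one_right]
    generalize shiftedProd Q (X / Q ^ j / Q) c = U
    generalize shiftedProd Q (Y / Q ^ j / Q) c = V
    generalize shiftedProd Q (Q ^ c) c = W at *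
    field_simp
    ring
  · rw [momentKernel_self, momentKernel_self, momentKernel_of_lt _ _ _ (Nat.lt_succ_self _)]
    ring
  · rw [momentKernel_of_lt _ _ _ h, momentKernel_of_lt _ _ _ h, momentKernel_of_lt _ _ _ (by omega)]
    ring

theorem momentKernel_zero_right (Q X Y : K) (j : ℕ) :
    momentKernel Q X Y 0 j = if j = 0 then 1 else 0 := by
  rcases j with - | j
  · simp [momentKernel_self]
  · simp [momentKernel]

/-- The `Q`-binomial coefficient. -/
def qBinom (Q : K) (a k : ℕ) : K := shiftedProd Q (Q ^ a) k / shiftedProd Q (Q ^ k) k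

theorem qBinom_zero_right (Q : K) (a : ℕ) : qBinom Q a 0 = 1 := by
  simp [qBinom, shiftedProd_zero]

theorem qBinom_eq_zero (Q : K) {a k : ℕ} (h : a < k) : qBinom Q a k = 0 := by
  rw [qBinom, shiftedProd_pow_eq_zero Q h, zero_div]

theorem qBinom_succ_succ {Q : K} (hQ : Q ≠ 0) (hQ1 : ∀ k : ℕ, Q ^ (k + 1) ≠ 1) (a k : ℕ) :
    Q ^ k * qBinom Q (a + 1) (k + 1) = Q ^ k * qBinom Q a (k + 1) + Q ^ a * qBinom Q a k := by
  have hW := shiftedProd_pow_self_ne_zero hQ hQ1 k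
  have hc := sub_ne_zero.2 (hQ1 k)
  rw [qBinom, qBinom, qBinom, shiftedProd_pow_self_succ hQ, shiftedProd_succ' hQ,
    shiftedProd_succ, pow_succ Q a, mul_div_cancel_right₀ _ hQ]
  field_simp
  ring

theorem qBinom_symm {Q : K} (hQ : Q ≠ 0) (hQ1 : ∀ k : ℕ, Q ^ (k + 1) ≠ 1) (a b : ℕ) :
    qBinom Q (a + b) a = qBinom Q (a + b) b := by
  have key : ∀ a b : ℕ, shiftedProd Q (Q ^ (a + b)) (a + b) =
      shiftedProd Q (Q ^ (a + b)) b * (Q ^ (b * a) * shiftedProd Q (Q ^ a) a) := fun a b => by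
    have h : ∀ i ∈ Finset.range a,
        Q ^ (a + b) - Q ^ (b + i) = Q ^ b * (Q ^ a - Q ^ i) := fun i _ => by ring
    rw [add_comm a b, shiftedProd, Finset.prod_range_add, add_comm b a, Finset.prod_congr rfl h,
      Finset.prod_mul_distrib]
    simp [shiftedProd, pow_mul]
  have ha := shiftedProd_pow_self_ne_zero hQ hQ1 a
  have hb := shiftedProd_pow_self_ne_zero hQ hQ1 b
  have h := (key a b).symm.trans (by rw [add_comm a b, key b a, add_comm b a, mul_comm a b])
  rw [qBinom, qBinom, div_eq_div_iff ha hb]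
  exact mul_left_cancel₀ (pow_ne_zero (b * a) hQ) (by linear_combination -h)

theorem map_shiftedProd {L : Type*} [Field L] (f : K →+* L) (Q x : K) (k : ℕ) :
    f (shiftedProd Q x k) = shiftedProd (f Q) (f x) k := by
  simp [shiftedProd, map_prod]

theorem map_qBinom {L : Type*} [Field L] (f : K →+* L) (Q : K) (a k : ℕ) :
    f (qBinom Q a k) = qBinom (f Q) a k := by
  simp [qBinom, map_shiftedProd]

theorem map_momentKernel {L : Type*} [Field L] (f : K →+* L) (Q X Y : K) (k j : ℕ) :
    f (momentKernel Q X Y k j) = momentKernel (f Q) (f X) (f Y) k j := by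
  simp only [momentKernel, apply_ite f, map_zero, map_mul, map_div₀, map_pow, map_neg, map_one,
    map_shiftedProd]

end Algebra

section Moments

variable {F : Type*} [Field F] [Fintype F] {ι : Type} [Fintype ι]

noncomputable local instance {V : Type*} [AddCommGroup V] [Module F V] [Finite V]
    (S : Submodule F V) : Fintype S := Fintype.ofFinite S

theorem rankFourier_linear (ψ : AddChar F ℂ) (c d : ℂ) (f g : ℕ → ℂ) (A : Matrix ι ι F) :
    rankFourier ψ (fun j => c * f j + d * g j) A =
      c * rankFourier ψ f A + d * rankFourier ψ g A := by
  simp only [rankFourier, Finset.mul_sum, ← Finset.sum_add_distrib]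
  exact Finset.sum_congr rfl fun B _ => by ring

theorem card_pow_ne_one (F : Type*) [Field F] [Fintype F] (k : ℕ) :
    ((Fintype.card F : ℂ) ^ 2) ^ (k + 1) ≠ 1 := by
  rw [← pow_mul]
  exact_mod_cast (Nat.one_lt_pow (by omega) Fintype.one_lt_card).ne'

theorem rankFourier_momentKernel_zero (h2 : (2 : F) ≠ 0) {ψ : AddChar F ℂ} (hψ : ψ.IsPrimitive)
    (ι : Type) [Fintype ι] (k : ℕ) :
    rankFourier ψ (momentKernel ((Fintype.card F : ℂ) ^ 2) (Fintype.card F ^ Fintype.card ι)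
      (Fintype.card F ^ Fintype.card ι / Fintype.card F) k) (0 : Matrix ι ι F) =
        if k = 0 then 1 else 0 := by
  have hq : (Fintype.card F : ℂ) ≠ 0 := Nat.cast_ne_zero.2 Fintype.card_ne_zero
  have hQ := pow_ne_zero 2 hq
  have hQ1 := card_pow_ne_one F
  induction hs : Fintype.card ι generalizing ι with
  | zero =>
    have := Fintype.card_eq_zero_iff.1 hs
    have : Unique (alternatingMatrix ι F) := ⟨⟨0⟩, fun B => by ext i; exact this.elim i⟩
    have h0 : ∀ B : alternatingMatrix ι F, B.1.rank = 0 := fun B => by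
      rw [Subsingleton.elim B.1 0, rank_zero]
    rw [rankFourier, Fintype.sum_unique]
    simp only [h0]
    rcases k with - | k
    · simp [momentKernel_zero_right]
    · simp [momentKernel, shiftedProd_succ' hQ]
  | succ s ih =>
    have e : ι ≃ Unit ⊕ Fin s := Fintype.equivOfCardEq (by simp [hs]; omega)
    have hz : (0 : Matrix ι ι F).reindex e e = 0 := by ext; simp
    rw [← rankFourier_reindex ψ _ _ e, hz, rankFourier_zero_border h2 hψ]
    have hX : (Fintype.card F : ℂ) ^ (s + 1) / Fintype.card F = Fintype.card F ^ s := by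
      rw [pow_succ, mul_div_cancel_right₀ _ hq]
    have hX' : (Fintype.card F : ℂ) ^ (s + 1) / Fintype.card F ^ 2 =
        Fintype.card F ^ s / Fintype.card F := by
      field_simp
      ring
    simp only [Fintype.card_fin, hX, momentKernel_border hQ hQ1, hX']
    have := ih (Fin s) (by simp)
    have hl := rankFourier_linear ψ (((Fintype.card F : ℂ) ^ 2) ^ k) 0
      (momentKernel ((Fintype.card F : ℂ) ^ 2) (Fintype.card F ^ s)
        (Fintype.card F ^ s / Fintype.card F) k) 0 (0 : Matrix (Fin s) (Fin s) F)
    simp only [zero_mul, add_zero] at hl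
    simp only [momentKernel_comm _ (_ / _)]
    rw [hl, this]
    split_ifs with hk
    · simp [hk]
    · simp

theorem rankFourier_momentKernel (h2 : (2 : F) ≠ 0) {ψ : AddChar F ℂ} (hψ : ψ.IsPrimitive)
    {A : Matrix ι ι F} (hA : A ∈ alternatingMatrix ι F) (k : ℕ) :
    rankFourier ψ (momentKernel ((Fintype.card F : ℂ) ^ 2) (Fintype.card F ^ Fintype.card ι)
      (Fintype.card F ^ Fintype.card ι / Fintype.card F) k) A =
        ((Fintype.card F : ℂ) ^ Fintype.card ι *
          (Fintype.card F ^ Fintype.card ι / Fintype.card F) /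
            ((Fintype.card F : ℂ) ^ 2) ^ (A.rank / 2)) ^ k *
          qBinom ((Fintype.card F : ℂ) ^ 2) (A.rank / 2) k := by
  classical
  have hq : (Fintype.card F : ℂ) ≠ 0 := Nat.cast_ne_zero.2 Fintype.card_ne_zero
  have hQ := pow_ne_zero 2 hq
  have hQ1 := card_pow_ne_one F
  revert k
  refine alternatingMatrix_induction (motive := fun ι _ _ A => ∀ k, rankFourier ψ (momentKernel
    ((Fintype.card F : ℂ) ^ 2) (Fintype.card F ^ Fintype.card ι)
      (Fintype.card F ^ Fintype.card ι / Fintype.card F) k) A =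
        ((Fintype.card F : ℂ) ^ Fintype.card ι *
          (Fintype.card F ^ Fintype.card ι / Fintype.card F) /
            ((Fintype.card F : ℂ) ^ 2) ^ (A.rank / 2)) ^ k *
          qBinom ((Fintype.card F : ℂ) ^ 2) (A.rank / 2) k) ?_ ?_ ?_ ?_ ι A hA
  · intro ι _ _ k
    rw [rankFourier_momentKernel_zero h2 hψ]
    rcases k with - | k
    · simp [qBinom_zero_right]
    · simp [qBinom_eq_zero]
  · intro ι κ _ _ _ _ e A hA h k
    have := h k
    rwa [rankFourier_reindex, rank_reindex, ← Fintype.card_congr e] at this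
  · intro ι _ _ P hP A hA h k
    rw [rankFourier_congr _ _ _ _ hP, rank_mul_eq_left_of_isUnit_det _ _ hP,
      rank_mul_eq_right_of_isUnit_det _ _ (by rwa [det_transpose]), h]
  · intro κ _ _ c hc A hA h k
    rw [rankFourier_border_border h2 hψ _ hc, rank_border_border hc hA,
      Nat.add_div_right _ (by norm_num)]
    rcases k with - | k
    · have h0 := h 0
      simp only [pow_zero, one_mul, qBinom_zero_right] at h0 ⊢
      rw [← h0]
      congr 1
      ext j
      rcases j with - | j <;> simp [momentKernel_zero_right]
    · have hcard : Fintype.card (Unit ⊕ (Unit ⊕ κ)) = Fintype.card κ + 2 := by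
        simp; omega
      have hX : (Fintype.card F : ℂ) ^ (Fintype.card κ + 2) / (Fintype.card F : ℂ) ^ 2 =
          Fintype.card F ^ Fintype.card κ := by
        rw [pow_add, mul_div_cancel_right₀ _ hQ]
      have hk := h k
      have hk1 := h (k + 1)
      have hB := qBinom_succ_succ hQ hQ1 (A.rank / 2) k
      simp only [hcard, momentKernel_diff hQ hQ1, div_right_comm _ (Fintype.card F : ℂ), hX]
      rw [rankFourier_linear, hk1, hk, pow_add _ (Fintype.card κ)]
      generalize (Fintype.card F : ℂ) ^ Fintype.card κ = X at *
      generalize A.rank / 2 = i at *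
      generalize (Fintype.card F : ℂ) ^ 2 = Q at *
      generalize (Fintype.card F : ℂ) = q at *
      have hZ : X * Q * (X * Q / q) / Q ^ (i + 1) = X * (X / q) / Q ^ i * Q := by
        field_simp
        ring
      have hZ' : X * Q * (X * Q / q) / Q = X * (X / q) / Q ^ i * Q ^ (i + 1) := by
        field_simp
        ring
      rw [hZ, hZ']
      generalize X * (X / q) / Q ^ i = Z
      linear_combination -Z ^ (k + 1) * Q * hB

theorem trace_transpose_mul_comm {R ι : Type*} [CommRing R] [Fintype ι] (A B : Matrix ι ι R) :
    trace (Aᵀ * B) = trace (Bᵀ * A) := by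
  rw [← trace_transpose, transpose_mul, transpose_transpose]

open scoped Classical in
theorem sum_rankFourier {ψ : AddChar F ℂ} (hψ : ψ.IsPrimitive) (h : ℕ → ℂ)
    (S : Submodule F (Matrix ι ι F)) :
    ∑ A : S, rankFourier ψ h A.1 = Fintype.card S * ∑ B : alternatingMatrix ι F,
      if ∀ A ∈ S, trace (B.1ᵀ * A) = 0 then h (B.1.rank / 2) else 0 := by
  simp only [rankFourier]
  rw [Finset.sum_comm, Finset.mul_sum]
  refine Finset.sum_congr rfl fun B _ => ?_
  let l : S →ₗ[F] F := traceLinearMap ι F F ∘ₗ LinearMap.mulLeft F B.1ᵀ ∘ₗ S.subtype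
  have hl : ∀ A : S, trace (A.1ᵀ * B.1) = l A := fun A => trace_transpose_mul_comm _ _
  have hl0 : l = 0 ↔ ∀ A ∈ S, trace (B.1ᵀ * A) = 0 :=
    ⟨fun h0 A hA => congrArg (fun f => f ⟨A, hA⟩) h0, fun h0 => LinearMap.ext fun A => h0 A.1 A.2⟩
  rw [← Finset.mul_sum]
  simp only [hl, sum_addChar_linearMap hψ, hl0]
  split_ifs <;> ring

open scoped Classical in
/-- The moment identity relating the rank distributions of a code and of its dual. -/
theorem moment_identity (h2 : (2 : F) ≠ 0) {S : Submodule F (Matrix ι ι F)}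
    (hS : S ≤ alternatingMatrix ι F) {q X Y : ℝ} (hq : q = Fintype.card F)
    (hX : X = q ^ Fintype.card ι) (hY : Y = q ^ Fintype.card ι / q) (k : ℕ) :
    ∑ A : S, (X * Y / (q ^ 2) ^ (A.1.rank / 2)) ^ k * qBinom (q ^ 2) (A.1.rank / 2) k =
      Fintype.card S * ∑ B : alternatingMatrix ι F,
        if ∀ A ∈ S, trace (B.1ᵀ * A) = 0 then momentKernel (q ^ 2) X Y k (B.1.rank / 2) else 0 := by
  subst hX hY hq
  have hψ := AddChar.FiniteField.primitiveChar_to_Complex_isPrimitive F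
  have h := sum_rankFourier hψ (momentKernel ((Fintype.card F : ℂ) ^ 2)
    (Fintype.card F ^ Fintype.card ι) (Fintype.card F ^ Fintype.card ι / Fintype.card F) k) S
  simp only [fun A : S => rankFourier_momentKernel h2 hψ (hS A.2) k] at h
  apply Complex.ofRealHom.injective
  simp only [map_sum, map_mul, map_pow, map_div₀, map_natCast, map_qBinom, apply_ite, map_zero,
    map_momentKernel]
  exact h

theorem sum_rank_eq_sum_card {S : Submodule F (Matrix ι ι F)} (hS : S ≤ alternatingMatrix ι F)
    (f : ℕ → ℝ) :
    ∑ A : S, f (A.1.rank / 2) = ∑ i ∈ Finset.range (Fintype.card ι / 2 + 1),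
      f i * (Nat.card {A : Matrix ι ι F // A ∈ S ∧ A.rank = 2 * i} : ℝ) := by
  classical
  have hmaps : ∀ A ∈ (Finset.univ : Finset S),
      A.1.rank / 2 ∈ Finset.range (Fintype.card ι / 2 + 1) := fun A _ =>
    Finset.mem_range.2 (Nat.lt_succ_of_le (Nat.div_le_div_right A.1.rank_le_card_width))
  rw [← Finset.sum_fiberwise_of_maps_to hmaps]
  refine Finset.sum_congr rfl fun i _ => ?_
  rw [Finset.sum_congr rfl (g := fun _ => f i) fun A hA => by rw [(Finset.mem_filter.1 hA).2],
    Finset.sum_const, nsmul_eq_mul, mul_comm, ← Fintype.card_subtype, ← Nat.card_eq_fintype_card]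
  congr 2
  refine Nat.card_congr
    ((Equiv.subtypeSubtypeEquivSubtypeInter (· ∈ S) fun A => A.rank / 2 = i).trans
    (Equiv.subtypeEquivRight fun A => and_congr_right fun hA => ?_))
  obtain ⟨r, hr⟩ := even_rank_of_mem_alternatingMatrix (hS hA)
  omega

end Moments

section Dual

variable {F : Type*} [Field F] {ι : Type*} [Fintype ι]

/-- The orthogonal complement within the alternating matrices. -/
def dualCode (S : Submodule F (Matrix ι ι F)) : Submodule F (Matrix ι ι F) where
  carrier := {A | A ∈ alternatingMatrix ι F ∧ ∀ B ∈ S, trace (Aᵀ * B) = 0}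
  zero_mem' := ⟨zero_mem _, by simp⟩
  add_mem' := fun ha hb => ⟨add_mem ha.1 hb.1, fun B hB => by
    rw [transpose_add, Matrix.add_mul, trace_add, ha.2 B hB, hb.2 B hB, add_zero]⟩
  smul_mem' := fun r A ha => ⟨Submodule.smul_mem _ r ha.1, fun B hB => by
    rw [transpose_smul, Matrix.smul_mul, trace_smul, ha.2 B hB, smul_zero]⟩

theorem dualCode_dualCode (h2 : (2 : F) ≠ 0) {S : Submodule F (Matrix ι ι F)}
    (hS : S ≤ alternatingMatrix ι F) : dualCode (dualCode S) = S := by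
  classical
  let T : LinearMap.BilinForm F (alternatingMatrix ι F) :=
    LinearMap.mk₂ F (fun A B => trace (A.1ᵀ * B.1))
      (fun A A' B => by simp [Matrix.add_mul]) (fun r A B => by simp)
      (fun A B B' => by simp [Matrix.mul_add]) (fun r A B => by simp)
  have hT : ∀ A B, T A B = trace (A.1ᵀ * B.1) := fun A B => rfl
  have hrefl : T.IsRefl := fun A B h => by rw [hT, trace_transpose_mul_comm, ← hT, h]
  have hnd : T.Nondegenerate := by
    refine hrefl.nondegenerate_iff_separatingLeft.2 fun A hA => ?_
    ext i j
    by_cases hij : i = j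
    · subst hij; exact A.2.2 i
    have hmem : single i j (1 : F) - single j i 1 ∈ alternatingMatrix ι F :=
      ⟨by simp, fun k => by by_cases hik : i = k <;> by_cases hjk : j = k <;> simp_all⟩
    have h := hA ⟨_, hmem⟩
    rw [hT] at h
    have hsw := apply_swap_of_mem_alternatingMatrix A.2 i j
    simp [Matrix.mul_sub, trace_sub, trace_mul_single, hsw] at h
    exact (mul_eq_zero.1 ((two_mul _).trans h)).resolve_left h2
  have hmem : ∀ (U : Submodule F (Matrix ι ι F)) (A : alternatingMatrix ι F),
      A ∈ T.orthogonal (U.comap (alternatingMatrix ι F).subtype) ↔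
        ∀ B ∈ U, B ∈ alternatingMatrix ι F → trace (A.1ᵀ * B) = 0 := fun U A => by
    rw [LinearMap.BilinForm.mem_orthogonal_iff]
    refine ⟨fun h B hB hB' => ?_, fun h B hB => ?_⟩
    · rw [trace_transpose_mul_comm]; exact h ⟨B, hB'⟩ hB
    · rw [hT, trace_transpose_mul_comm]; exact h B.1 hB B.2
  have hdual : ∀ U ≤ alternatingMatrix ι F, (dualCode U).comap (alternatingMatrix ι F).subtype =
      T.orthogonal (U.comap (alternatingMatrix ι F).subtype) := fun U hU => by
    ext A
    rw [hmem]
    exact ⟨fun h B hB _ => h.2 B hB, fun h => ⟨A.2, fun B hB => h B hB (hU hB)⟩⟩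
  have h := LinearMap.BilinForm.orthogonal_orthogonal hnd hrefl
    (S.comap (alternatingMatrix ι F).subtype)
  rw [← hdual S hS, ← hdual (dualCode S) fun A hA => hA.1] at h
  ext A
  constructor
  · intro hA
    exact (SetLike.ext_iff.1 h ⟨A, hA.1⟩).1 hA
  · intro hA
    exact (SetLike.ext_iff.1 h ⟨A, hS hA⟩).2 hA

end Dual

section Codes

variable {F : Type*} [Field F] [Fintype F] {ι : Type} [Fintype ι]

noncomputable local instance {V : Type*} [AddCommGroup V] [Module F V] [Finite V]
    (S : Submodule F V) : Fintype S := Fintype.ofFinite S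

theorem sum_moment_of_lt_rank_dual (h2 : (2 : F) ≠ 0) {S : Submodule F (Matrix ι ι F)}
    (hS : S ≤ alternatingMatrix ι F) {q X Y : ℝ} (hq : q = Fintype.card F)
    (hX : X = q ^ Fintype.card ι) (hY : Y = q ^ Fintype.card ι / q) {k : ℕ}
    (h : ∀ A ∈ dualCode S, A ≠ 0 → 2 * k < A.rank) :
    ∑ A : S, (X * Y / (q ^ 2) ^ (A.1.rank / 2)) ^ k * qBinom (q ^ 2) (A.1.rank / 2) k =
      Fintype.card S * momentKernel (q ^ 2) X Y k 0 := by
  classical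
  rw [moment_identity h2 hS hq hX hY, Fintype.sum_eq_single 0]
  · simp
  · intro B hB
    split_ifs with hd
    · have := h B.1 ⟨B.2, hd⟩ (by simpa using hB)
      obtain ⟨r, hr⟩ := even_rank_of_mem_alternatingMatrix B.2
      exact momentKernel_of_lt _ _ _ (by omega)
    · rfl

theorem sum_momentKernel_of_rank_dual_lt (h2 : (2 : F) ≠ 0) {S : Submodule F (Matrix ι ι F)}
    (hS : S ≤ alternatingMatrix ι F) {q X Y : ℝ} (hq : q = Fintype.card F)
    (hX : X = q ^ Fintype.card ι) (hY : Y = q ^ Fintype.card ι / q) {k : ℕ}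
    (h : ∀ A ∈ dualCode S, A.rank < 2 * k) :
    ∑ A : S, momentKernel (q ^ 2) X Y k (A.1.rank / 2) = 0 := by
  classical
  have hd := moment_identity h2 (S := dualCode S) (fun A hA => hA.1) hq hX hY k
  rw [Finset.sum_eq_zero fun A _ => by
    have := h A.1 A.2
    rw [qBinom_eq_zero _ (by omega), mul_zero], zero_eq_mul] at hd
  rw [← hd.resolve_left (Nat.cast_ne_zero.2 Fintype.card_ne_zero), ← Finset.sum_filter]
  have hmem : ∀ B : alternatingMatrix ι F,
      (∀ A ∈ dualCode S, trace (B.1ᵀ * A) = 0) ↔ B.1 ∈ S := fun B =>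
    ⟨fun hB => by rw [← dualCode_dualCode h2 hS]; exact ⟨B.2, hB⟩,
      fun hB A hA => by rw [trace_transpose_mul_comm]; exact hA.2 _ hB⟩
  refine Finset.sum_bij (fun A _ => ⟨A.1, hS A.2⟩) (fun A _ => ?_) (fun A _ B _ hAB => ?_)
    (fun B hB => ?_) (fun A _ => rfl)
  · simp [hmem]
  · exact Subtype.ext (congrArg (fun B => B.1) hAB)
  · exact ⟨⟨B.1, (hmem B).1 (Finset.mem_filter.1 hB).2⟩, Finset.mem_univ _, rfl⟩

end Codes

section CharTwo

theorem trace_transpose_mul_eq_zero_of_two_eq_zero {F : Type*} [Field F] {ι : Type*} [Fintype ι]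
    (h2 : (2 : F) = 0) {A B : Matrix ι ι F} (hA : A ∈ alternatingMatrix ι F)
    (hB : B ∈ alternatingMatrix ι F) : trace (Aᵀ * B) = 0 := by
  simp only [Matrix.trace, Matrix.diag, Matrix.mul_apply, transpose_apply]
  refine sum_sum_eq_zero_of_antisymm (fun i j => ?_) (fun i => by rw [hA.2, zero_mul])
  rw [apply_swap_of_mem_alternatingMatrix hA i j, apply_swap_of_mem_alternatingMatrix hB i j]
  linear_combination A i j * B i j * h2

end CharTwo

section Parameters

theorem rpow_two_mul_natCast {q : ℝ} (i : ℕ) : q ^ (2 * (i : ℝ)) = (q ^ 2) ^ i := by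
  rw [← pow_mul, ← Real.rpow_natCast]
  push_cast
  rfl

theorem gaussQ_natCast (q : ℝ) (a k : ℕ) : gaussQ q a k = qBinom (q ^ 2) a k := by
  simp only [gaussQ, rpow_two_mul_natCast, Finset.prod_div_distrib, qBinom, shiftedProd]

theorem skewGamma_natCast (q : ℝ) (m k : ℕ) : skewGamma q m k = shiftedProd (q ^ 2) (q ^ m) k := by
  simp only [skewGamma, rpow_two_mul_natCast, Real.rpow_natCast, shiftedProd]

theorem skewGamma_sub {q : ℝ} (hq : 0 < q) (m i k : ℕ) :
    skewGamma q ((m : ℝ) - 2 * i) k = shiftedProd (q ^ 2) (q ^ m / (q ^ 2) ^ i) k := by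
  simp only [skewGamma, Real.rpow_sub hq, rpow_two_mul_natCast, Real.rpow_natCast, shiftedProd]

theorem momentKernel_eq_gaussQ_mul_skewGamma {q : ℝ} (hq : 1 < q) {n φ i : ℕ} (m : ℕ)
    (hi : i ≤ φ) (hφ : φ ≤ n) :
    momentKernel (q ^ 2) ((q ^ 2) ^ n) (q ^ m) φ i =
      (-1) ^ i * q ^ (i * (i - 1)) * q ^ (2 * i * (φ - i)) *
        gaussQ q ((n : ℝ) - i) (n - φ) * skewGamma q ((m : ℝ) - 2 * i) (φ - i) := by
  have hq0 : 0 < q := one_pos.trans hq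
  have hQ : q ^ 2 ≠ 0 := (pow_pos hq0 2).ne'
  have hQ1 : ∀ k : ℕ, (q ^ 2) ^ (k + 1) ≠ 1 := fun k => by
    rw [← pow_mul]
    exact (one_lt_pow₀ hq (by omega)).ne'
  obtain ⟨a, rfl⟩ := Nat.exists_eq_add_of_le hi
  obtain ⟨b, rfl⟩ := Nat.exists_eq_add_of_le hφ
  have hb : ((i + a + b : ℕ) : ℝ) - i = (a + b : ℕ) := by push_cast; ring
  have hpow : (q ^ 2) ^ (i + a + b) / (q ^ 2) ^ i = (q ^ 2) ^ (a + b) := by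
    rw [add_assoc, pow_add, mul_div_cancel_left₀ _ (pow_ne_zero _ hQ)]
  have hch : (q ^ 2) ^ i.choose 2 = q ^ (i * (i - 1)) := by
    rw [← pow_mul, Nat.choose_two_right, Nat.mul_div_cancel' (Nat.even_mul_pred_self i).two_dvd]
  rw [momentKernel_add, hb, gaussQ_natCast, skewGamma_sub hq0, Nat.add_sub_cancel_left,
    Nat.add_sub_cancel_left, ← qBinom_symm hQ hQ1, hpow, hch, qBinom, mul_assoc 2 i, pow_mul q 2]
  ring

theorem eq_of_two_mul_floor {t n m : ℕ} (ht : 2 ≤ t) (hn : n = t / 2)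
    (hm : m = t * (t - 1) / (2 * n)) : (t = 2 * n ∧ t = m + 1) ∨ (t = 2 * n + 1 ∧ t = m) := by
  rcases Nat.even_or_odd' t with ⟨s, rfl | rfl⟩
  · obtain rfl : n = s := by omega
    rw [Nat.mul_div_cancel_left _ (by omega)] at hm
    omega
  · obtain rfl : n = s := by omega
    rw [Nat.add_sub_cancel, Nat.mul_div_cancel _ (by omega)] at hm
    omega

theorem momentKernel_card {q : ℝ} (hq : 1 < q) {t n m : ℕ} (ht : 2 ≤ t) (hn : n = t / 2)
    (hm : m = t * (t - 1) / (2 * n)) (k j : ℕ) :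
    momentKernel (q ^ 2) (q ^ t) (q ^ t / q) k j =
      momentKernel (q ^ 2) ((q ^ 2) ^ n) (q ^ m) k j := by
  have hq0 : q ≠ 0 := (one_pos.trans hq).ne'
  rcases eq_of_two_mul_floor ht hn hm with ⟨h, h'⟩ | ⟨h, h'⟩
  · have hY : q ^ t / q = q ^ m := by rw [h', pow_succ, mul_div_cancel_right₀ _ hq0]
    rw [hY, h, pow_mul]
  · have hY : q ^ t / q = (q ^ 2) ^ n := by
      rw [h, pow_succ, mul_div_cancel_right₀ _ hq0, pow_mul]
    rw [hY, h', momentKernel_comm]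

theorem pow_card_mul {q : ℝ} (hq : 1 < q) {t n m : ℕ} (ht : 2 ≤ t) (hn : n = t / 2)
    (hm : m = t * (t - 1) / (2 * n)) : q ^ t * (q ^ t / q) = (q ^ 2) ^ n * q ^ m := by
  have hq0 : q ≠ 0 := (one_pos.trans hq).ne'
  rcases eq_of_two_mul_floor ht hn hm with ⟨h, h'⟩ | ⟨h, h'⟩
  · have hY : q ^ t / q = q ^ m := by rw [h', pow_succ, mul_div_cancel_right₀ _ hq0]
    rw [hY, h, pow_mul]
  · have hY : q ^ t / q = (q ^ 2) ^ n := by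
      rw [h, pow_succ, mul_div_cancel_right₀ _ hq0, pow_mul]
    rw [hY, h', mul_comm]

end Parameters

end

/-- Simplified moment identities: (a) when `φ` is less than the minimum skew rank distance of
the dual code; (b) when `φ` exceeds the diameter of the dual code. -/
theorem stmt17 (q : ℕ) (hq : IsPrimePow q) (F : Type*) [Field F] [Fintype F]
    (hF : Fintype.card F = q) (t : ℕ) (ht : 2 ≤ t) (n m : ℕ)
    (hn : n = t / 2) (hm : m = t * (t - 1) / (2 * n))
    (𝒞 : Submodule F (Matrix (Fin t) (Fin t) F))
    (h𝒞 : ∀ A ∈ 𝒞, A.transpose = -A ∧ ∀ i, A i i = 0)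
    (c : ℕ → ℕ)
    (hc : ∀ i, c i = Nat.card {A : Matrix (Fin t) (Fin t) F // A ∈ 𝒞 ∧ A.rank = 2 * i})
    (φ : ℕ) (hφ : φ ≤ n) :
    ((∀ A : Matrix (Fin t) (Fin t) F,
        (A.transpose = -A ∧ ∀ j, A j j = 0) →
        (∀ B ∈ 𝒞, Matrix.trace (A.transpose * B) = 0) → A ≠ 0 → 2 * φ < A.rank) →
      (q : ℝ) ^ (m * φ) *
          ∑ i ∈ Finset.Icc φ n, (q : ℝ) ^ (2 * φ * (n - i)) * gaussQ (q : ℝ) (i : ℝ) φ * (c i : ℝ)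
        = (Nat.card 𝒞 : ℝ) * gaussQ (q : ℝ) (n : ℝ) φ * skewGamma (q : ℝ) (m : ℝ) φ)
    ∧ ((∀ A : Matrix (Fin t) (Fin t) F,
        (A.transpose = -A ∧ ∀ j, A j j = 0) →
        (∀ B ∈ 𝒞, Matrix.trace (A.transpose * B) = 0) → A.rank < 2 * φ) →
      ∑ i ∈ Finset.range (φ + 1),
          (-1 : ℝ) ^ i * (q : ℝ) ^ (i * (i - 1)) * (q : ℝ) ^ (2 * i * (φ - i)) *
            gaussQ (q : ℝ) ((n : ℝ) - (i : ℝ)) (n - φ) *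
            skewGamma (q : ℝ) ((m : ℝ) - 2 * (i : ℝ)) (φ - i) * (c i : ℝ) = 0) := by
  have hq1 : (1 : ℝ) < q := by
    rw [← hF]
    exact_mod_cast Fintype.one_lt_card (α := F)
  have hqF : (q : ℝ) = Fintype.card F := by rw [hF]
  have hS : 𝒞 ≤ alternatingMatrix (Fin t) F := h𝒞
  have hcard : Nat.card 𝒞 = @Fintype.card 𝒞 (Fintype.ofFinite 𝒞) :=
    @Nat.card_eq_fintype_card 𝒞 (Fintype.ofFinite 𝒞)
  -- The weighted sums over the code are sums over its weight distribution.
  have hsum := fun f : ℕ → ℝ => sum_rank_eq_sum_card hS f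
  simp only [Fintype.card_fin, ← hn, ← hc] at hsum
  have hker : ∀ i ≤ φ, momentKernel ((q : ℝ) ^ 2) (q ^ t) (q ^ t / q) φ i = _ := fun i hi =>
    (momentKernel_card hq1 ht hn hm φ i).trans
      (momentKernel_eq_gaussQ_mul_skewGamma hq1 m hi hφ)
  have hsumA : (q : ℝ) ^ (m * φ) * ∑ i ∈ Finset.Icc φ n,
      (q : ℝ) ^ (2 * φ * (n - i)) * gaussQ (q : ℝ) (i : ℝ) φ * (c i : ℝ) =
      ∑ i ∈ Finset.range (n + 1), ((q : ℝ) ^ t * (q ^ t / q) / (q ^ 2) ^ i) ^ φ *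
        qBinom ((q : ℝ) ^ 2) i φ * (c i : ℝ) := by
    rw [Finset.mul_sum, eq_comm]
    refine (Finset.sum_subset_zero_on_sdiff (fun i hi => ?_) (fun i hi => ?_)
      fun i hi => ?_).symm
    · rw [Finset.mem_Icc] at hi
      exact Finset.mem_range.2 (by omega)
    · simp only [Finset.mem_sdiff, Finset.mem_range, Finset.mem_Icc, not_and, not_le] at hi
      rw [qBinom_eq_zero _ (by by_contra! h; have := hi.2 h; omega), mul_zero, zero_mul]
    · obtain ⟨d, rfl⟩ := Nat.exists_eq_add_of_le (Finset.mem_Icc.1 hi).2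
      have hQ : ((q : ℝ) ^ 2) ^ i ≠ 0 := by positivity
      have hbase : (q : ℝ) ^ t * (q ^ t / q) / (q ^ 2) ^ i = q ^ m * q ^ (2 * d) := by
        rw [pow_card_mul hq1 ht hn hm, pow_add, pow_mul]
        field_simp
      rw [hbase, gaussQ_natCast, Nat.add_sub_cancel_left, mul_pow, ← pow_mul, ← pow_mul,
        mul_right_comm 2 φ d]
      ring
  by_cases h2 : (2 : F) = 0
  · have htr : ∀ A ∈ alternatingMatrix (Fin t) F, ∀ B ∈ 𝒞, Matrix.trace (A.transpose * B) = 0 :=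
      fun A hA B hB => trace_transpose_mul_eq_zero_of_two_eq_zero h2 hA (hS hB)
    refine ⟨fun h => ?_, fun h => ?_⟩
    · rcases Nat.eq_zero_or_pos φ with rfl | hφ0
      · have := hsum 1
        rw [hsumA]
        simp only [pow_zero, one_mul, qBinom_zero_right, gaussQ, skewGamma, Finset.range_zero,
          Finset.prod_empty, mul_one, hcard]
        simpa using this.symm
      · obtain ⟨A, hA, hr⟩ := exists_mem_alternatingMatrix_rank (F := F) (Fin t) (r := 1)
          (by simpa using ht)
        have := h A hA (htr A hA) (by rintro rfl; simp at hr)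
        omega
    · obtain ⟨A, hA, hr⟩ := exists_mem_alternatingMatrix_rank (F := F) (Fin t) (r := n)
        (by rw [Fintype.card_fin]; omega)
      have := h A hA (htr A hA)
      omega
  refine ⟨fun h => ?_, fun h => ?_⟩
  · have key := sum_moment_of_lt_rank_dual h2 hS hqF (by rw [Fintype.card_fin])
      (by rw [Fintype.card_fin]) (k := φ) fun A hA => h A hA.1 hA.2
    rw [hsumA, ← hsum fun i => ((q : ℝ) ^ t * (q ^ t / q) / (q ^ 2) ^ i) ^ φ *
        qBinom ((q : ℝ) ^ 2) i φ, key, hcard, momentKernel_card hq1 ht hn hm, momentKernel,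
      if_pos φ.zero_le, gaussQ_natCast, skewGamma_natCast, qBinom]
    simp
    ring
  · have key := sum_momentKernel_of_rank_dual_lt h2 hS hqF (by rw [Fintype.card_fin])
      (by rw [Fintype.card_fin]) (k := φ) fun A hA => h A hA.1 hA.2
    rw [hsum] at key
    rw [← key, ← Finset.sum_subset (Finset.range_subset_range.2 (Nat.succ_le_succ hφ))]
    · exact Finset.sum_congr rfl fun i hi => by
        rw [hker i (Nat.lt_succ_iff.1 (Finset.mem_range.1 hi))]
    · intro i _ hi
      rw [momentKernel_of_lt _ _ _ (by simpa using hi), zero_mul]
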